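/- There exist an integer k0 and constants C, c > 0 such that for every k >= k0 the following holds. Let psi(y_1, y_2) = -y_2 * ln(y_2/y_1) - (1 - y_2) * ln((1-y_2)/(1-y_1)) and let Y = {(y_1,y_2) in (0,1)^2 : |y_1 - y_2| <= k^3 * 2^{-k} and |y_i - 1/4| <= 1/k^2 for i = 1,2}. Then both the function (y_1,y_2) -> psi(y_1,y_2) and the function (y_1,y_2) -> (1 - y_2) * psi(y_1,y_2) are (C * k^c * 2^{-k})-tame on Y. -/

import Mathlib

noncomputable section

/-- First partial derivative of `g` in coordinate `i`. -/
def pd1 {k : ℕ} (g : (Fin k → ℝ) → ℝ) (i : Fin k) (z : Fin k → ℝ) : ℝ :=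
  fderiv ℝ g z (Pi.single i 1)

/-- Second partial derivative of `g` in coordinates `i`, `j`. -/
def pd2 {k : ℕ} (g : (Fin k → ℝ) → ℝ) (i j : Fin k) (z : Fin k → ℝ) : ℝ :=
  fderiv ℝ (fun w => fderiv ℝ g w (Pi.single i 1)) z (Pi.single j 1)

/-- The open box `(0,1)^k`. -/
def box (k : ℕ) : Set (Fin k → ℝ) := {z | ∀ i, z i ∈ Set.Ioo (0 : ℝ) 1}

/-- `Ψ` is `ε`-tame on `Y`: (T1) `Ψ(y,y) = 0` on the diagonal of `(0,1)²`;
(T2) `|∑_i ∂²Ψ/∂z_i∂z_j| ≤ ε` on `Y` for each `j`; (T3) `|∑_{i,j} ∂²Ψ/∂z_i∂z_j| ≤ ε²`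
on `Y`; (T4) `|∂²Ψ/∂z_i∂z_j| ≤ 100` on `Y` for all `i, j`. -/
def IsTame (eps : ℝ) (Ψ : (Fin 2 → ℝ) → ℝ) (Y : Set (Fin 2 → ℝ)) : Prop :=
  (∀ y : ℝ, y ∈ Set.Ioo (0 : ℝ) 1 → Ψ (fun _ => y) = 0) ∧
  (∀ z ∈ Y, ∀ j : Fin 2, |∑ i : Fin 2, pd2 Ψ i j z| ≤ eps) ∧
  (∀ z ∈ Y, |∑ i : Fin 2, ∑ j : Fin 2, pd2 Ψ i j z| ≤ eps ^ 2) ∧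
  (∀ z ∈ Y, ∀ i j : Fin 2, |pd2 Ψ i j z| ≤ 100)

/-- The rate function `ψ(y₁, y₂) = -y₂ ln(y₂/y₁) - (1 - y₂) ln((1-y₂)/(1-y₁))`,
as a function of `z : Fin 2 → ℝ` with `y₁ = z 0`, `y₂ = z 1`. -/
def psiFun : (Fin 2 → ℝ) → ℝ := fun z =>
  -(z 1) * Real.log (z 1 / z 0) - (1 - z 1) * Real.log ((1 - z 1) / (1 - z 0))

/-- `Y = {(y₁,y₂) ∈ (0,1)² : |y₁ - y₂| ≤ k³ 2^{-k}, |y_i - 1/4| ≤ 1/k²}`. -/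
def Yset (k : ℕ) : Set (Fin 2 → ℝ) :=
  {z | (∀ i, z i ∈ Set.Ioo (0 : ℝ) 1) ∧
    |z 0 - z 1| ≤ (k : ℝ) ^ 3 * ((2 : ℝ) ^ k)⁻¹ ∧
    |z 0 - 1 / 4| ≤ 1 / (k : ℝ) ^ 2 ∧ |z 1 - 1 / 4| ≤ 1 / (k : ℝ) ^ 2}

/-!
`ψ(y₁, y₂) = H(y₂) - H(y₁) - H'(y₁) (y₂ - y₁)` is the Bregman divergence of the binary entropy `H`,
so it vanishes to second order on the diagonal. The diagonal derivative `∂₀ + ∂₁` turns the Bregman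
divergence of `F` into that of `F'`. Applied twice, it bounds the sum of all second derivatives by a
multiple of `|y₁ - y₂|²`; applied once and followed by a coordinate derivative, it bounds the column
sums of the Hessian by a multiple of `|y₁ - y₂|`. By the product rule these estimates persist under
multiplication by a `C²` weight. Tracking constants on `[1/5, 3/10]²`, a neighbourhood of
`(1/4, 1/4)`, keeps the individual second derivatives below `100`.
-/

open Filter Topology

section AbsoluteValues

lemma abs_mul_le_mul {a b α β : ℝ} (ha : |a| ≤ α) (hb : |b| ≤ β) : |a * b| ≤ α * β := by
  rw [abs_mul]
  exact mul_le_mul ha hb (abs_nonneg b) ((abs_nonneg a).trans ha)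

lemma abs_add_four_le {a b c d : ℝ} : |a + b + c + d| ≤ |a| + |b| + |c| + |d| := by
  grw [abs_add_le, abs_add_three]

lemma abs_sum_fin_le {n : ℕ} {a : Fin n → ℝ} {α : ℝ} (ha : ∀ i, |a i| ≤ α) :
    |∑ i, a i| ≤ n * α := by
  simpa using norm_sum_le_of_le (f := a) Finset.univ fun i _ => ha i

end AbsoluteValues

section PartialDerivatives

variable {n : ℕ} {f g : (Fin n → ℝ) → ℝ} {z : Fin n → ℝ}

lemma pd2_eq_pd1_pd1 (f : (Fin n → ℝ) → ℝ) (i j : Fin n) (z : Fin n → ℝ) :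
    pd2 f i j z = pd1 (pd1 f i) j z :=
  rfl

lemma pd1_congr (h : f =ᶠ[𝓝 z] g) (i : Fin n) : pd1 f i z = pd1 g i z := by
  rw [pd1, pd1, h.fderiv_eq]

lemma pd2_congr (h : f =ᶠ[𝓝 z] g) (i j : Fin n) : pd2 f i j z = pd2 g i j z :=
  pd1_congr (h.eventuallyEq_nhds.mono fun _ hw => pd1_congr hw i) j

lemma pd1_const (c : ℝ) (i : Fin n) : pd1 (fun _ => c) i z = 0 := by
  simp [pd1]

lemma pd1_add (hf : DifferentiableAt ℝ f z) (hg : DifferentiableAt ℝ g z) (i : Fin n) :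
    pd1 (fun w => f w + g w) i z = pd1 f i z + pd1 g i z := by
  simp [pd1, fderiv_fun_add hf hg]

lemma pd1_sub (hf : DifferentiableAt ℝ f z) (hg : DifferentiableAt ℝ g z) (i : Fin n) :
    pd1 (fun w => f w - g w) i z = pd1 f i z - pd1 g i z := by
  simp [pd1, fderiv_fun_sub hf hg]

lemma pd1_mul (hf : DifferentiableAt ℝ f z) (hg : DifferentiableAt ℝ g z) (i : Fin n) :
    pd1 (fun w => f w * g w) i z = f z * pd1 g i z + g z * pd1 f i z := by
  simp [pd1, fderiv_fun_mul hf hg]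

lemma hasFDerivAt_comp_apply {φ : ℝ → ℝ} {l : Fin n} (hφ : DifferentiableAt ℝ φ (z l)) :
    HasFDerivAt (fun w => φ (w l)) (deriv φ (z l) • ContinuousLinearMap.proj (R := ℝ) l) z :=
  hφ.hasDerivAt.comp_hasFDerivAt z (hasFDerivAt_apply (F' := fun _ : Fin n => ℝ) l z)

lemma pd1_comp_apply {φ : ℝ → ℝ} {l : Fin n} (hφ : DifferentiableAt ℝ φ (z l)) (i : Fin n) :
    pd1 (fun w => φ (w l)) i z = if i = l then deriv φ (z l) else 0 := by
  rw [pd1, (hasFDerivAt_comp_apply hφ).fderiv]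
  simp [Pi.single_apply, eq_comm]

lemma pd1_apply (l i : Fin n) : pd1 (fun w => w l) i z = if i = l then 1 else 0 := by
  simpa using pd1_comp_apply (z := z) (l := l) differentiableAt_id i

lemma pd1_one_sub_apply (l i : Fin n) : pd1 (fun w => 1 - w l) i z = if i = l then -1 else 0 := by
  rw [pd1_sub (by fun_prop) (by fun_prop), pd1_const, pd1_apply]
  split_ifs <;> simp

lemma pd2_one_sub_apply (l i j : Fin n) : pd2 (fun w => 1 - w l) i j z = 0 := by
  have hpd1 : pd1 (fun w => 1 - w l) i = fun _ => if i = l then -1 else 0 :=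
    funext fun _ => pd1_one_sub_apply l i
  rw [pd2_eq_pd1_pd1, hpd1, pd1_const]

lemma contDiffAt_pd1 {m : WithTop ℕ∞} (hf : ContDiffAt ℝ (m + 1) f z) (i : Fin n) :
    ContDiffAt ℝ m (pd1 f i) z :=
  hf.fderiv_right_succ.clm_apply contDiffAt_const

lemma differentiableAt_pd1 (hf : ContDiffAt ℝ 2 f z) (i : Fin n) :
    DifferentiableAt ℝ (pd1 f i) z :=
  (contDiffAt_pd1 (m := 1) hf i).differentiableAt one_ne_zero

lemma pd2_mul (hf : ContDiffAt ℝ 2 f z) (hg : ContDiffAt ℝ 2 g z) (i j : Fin n) :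
    pd2 (fun w => f w * g w) i j z =
      f z * pd2 g i j z + pd1 f i z * pd1 g j z + pd1 f j z * pd1 g i z + g z * pd2 f i j z := by
  have hpd1 : pd1 (fun w => f w * g w) i =ᶠ[𝓝 z] fun w => f w * pd1 g i w + g w * pd1 f i w := by
    filter_upwards [hf.eventually (by simp), hg.eventually (by simp)] with w hfw hgw
    exact pd1_mul (hfw.differentiableAt two_ne_zero) (hgw.differentiableAt two_ne_zero) i
  have df := hf.differentiableAt two_ne_zero
  have dg := hg.differentiableAt two_ne_zero
  have df' := differentiableAt_pd1 hf i
  have dg' := differentiableAt_pd1 hg i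
  rw [pd2_eq_pd1_pd1, pd1_congr hpd1, pd1_add (df.fun_mul dg') (dg.fun_mul df'), pd1_mul df dg',
    pd1_mul dg df', pd2_eq_pd1_pd1, pd2_eq_pd1_pd1]
  ring

lemma sum_pd1_mul (hf : DifferentiableAt ℝ f z) (hg : DifferentiableAt ℝ g z) :
    ∑ i, pd1 (fun w => f w * g w) i z = f z * ∑ i, pd1 g i z + (∑ i, pd1 f i z) * g z := by
  simp only [pd1_mul hf hg, Finset.sum_add_distrib, Finset.mul_sum, mul_comm (g z),
    Finset.sum_mul]

lemma sum_pd2_mul (hf : ContDiffAt ℝ 2 f z) (hg : ContDiffAt ℝ 2 g z) (j : Fin n) :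
    ∑ i, pd2 (fun w => f w * g w) i j z =
      f z * ∑ i, pd2 g i j z + (∑ i, pd1 f i z) * pd1 g j z + pd1 f j z * ∑ i, pd1 g i z +
        (∑ i, pd2 f i j z) * g z := by
  simp only [pd2_mul hf hg, Finset.sum_add_distrib, Finset.mul_sum, mul_comm (g z),
    Finset.sum_mul]

lemma sum_sum_pd2_mul (hf : ContDiffAt ℝ 2 f z) (hg : ContDiffAt ℝ 2 g z) :
    ∑ i, ∑ j, pd2 (fun w => f w * g w) i j z =
      f z * ∑ i, ∑ j, pd2 g i j z + (∑ i, pd1 f i z) * ∑ j, pd1 g j z +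
        (∑ j, pd1 f j z) * ∑ i, pd1 g i z + (∑ i, ∑ j, pd2 f i j z) * g z := by
  simp only [pd2_mul hf hg, Finset.sum_add_distrib, mul_comm (g z), ← Finset.mul_sum,
    ← Finset.sum_mul]

end PartialDerivatives

/-- The one-dimensional Bregman divergence of `F`: the error at `z 1` of the linear approximation
of `F` based at `z 0`. -/
def bregman (F : ℝ → ℝ) (z : Fin 2 → ℝ) : ℝ :=
  F (z 1) - F (z 0) - deriv F (z 0) * (z 1 - z 0)

section Bregman

variable {F : ℝ → ℝ} {z : Fin 2 → ℝ}

lemma bregman_diag (F : ℝ → ℝ) (y : ℝ) : bregman F (fun _ => y) = 0 := by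
  simp [bregman]

lemma contDiffAt_bregman {m : WithTop ℕ∞} (h0 : ContDiffAt ℝ (m + 1) F (z 0))
    (h1 : ContDiffAt ℝ m F (z 1)) : ContDiffAt ℝ m (bregman F) z := by
  have coord (i : Fin 2) : ContDiffAt ℝ m (fun w : Fin 2 → ℝ => w i) z := contDiffAt_apply ..
  have hF0 := (h0.of_le le_self_add).comp z (coord 0)
  have hF1 := h1.comp z (coord 1)
  have hF' := (h0.derivWithin le_rfl).comp z (coord 0)
  exact (hF1.sub hF0).sub (hF'.mul ((coord 1).sub (coord 0)))

lemma contDiffAt_iterate_deriv {m : WithTop ℕ∞} {x : ℝ} (n : ℕ) (h : ContDiffAt ℝ (m + n) F x) :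
    ContDiffAt ℝ m (deriv^[n] F) x := by
  induction n generalizing F with
  | zero => simpa using h
  | succ n ih => exact ih (h.derivWithin (by push_cast; rw [add_assoc]))

lemma differentiableAt_iterate_deriv {x : ℝ} (n : ℕ) (h : ContDiffAt ℝ (n + 1) F x) :
    DifferentiableAt ℝ (deriv^[n] F) x :=
  (contDiffAt_iterate_deriv (m := 1) n (by rwa [add_comm])).differentiableAt one_ne_zero

lemma pd1_bregman (h0 : ContDiffAt ℝ 2 F (z 0)) (h1 : DifferentiableAt ℝ F (z 1)) (i : Fin 2) :
    pd1 (bregman F) i z =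
      ![deriv^[2] F (z 0) * (z 0 - z 1), deriv F (z 1) - deriv F (z 0)] i := by
  have dF := h0.differentiableAt two_ne_zero
  have dF' : DifferentiableAt ℝ (deriv F) (z 0) := differentiableAt_iterate_deriv 1 h0
  have hF0 := (hasFDerivAt_comp_apply dF).differentiableAt
  have hF1 := (hasFDerivAt_comp_apply h1).differentiableAt
  have hF' := (hasFDerivAt_comp_apply dF').differentiableAt
  unfold bregman
  rw [pd1_sub (by fun_prop) (by fun_prop), pd1_sub hF1 hF0, pd1_mul hF' (by fun_prop),
    pd1_sub (by fun_prop) (by fun_prop), pd1_comp_apply h1, pd1_comp_apply dF,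
    pd1_comp_apply dF', pd1_apply, pd1_apply]
  fin_cases i
  · simp only [Fin.zero_eta, zero_ne_one, ↓reduceIte, Matrix.cons_val_zero,
      Function.iterate_succ_apply, Function.iterate_zero_apply]
    ring
  · simp

lemma pd2_bregman (h0 : ContDiffAt ℝ 3 F (z 0)) (h1 : ContDiffAt ℝ 2 F (z 1)) (i j : Fin 2) :
    pd2 (bregman F) i j z =
      !![deriv^[2] F (z 0) + deriv^[3] F (z 0) * (z 0 - z 1), -deriv^[2] F (z 0);
        -deriv^[2] F (z 0), deriv^[2] F (z 1)] i j := by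
  have hgrad : ∀ᶠ w in 𝓝 z, ∀ i, pd1 (bregman F) i w =
      ![deriv^[2] F (w 0) * (w 0 - w 1), deriv F (w 1) - deriv F (w 0)] i := by
    filter_upwards [(continuous_apply 0).continuousAt.eventually (h0.eventually (by simp)),
      (continuous_apply 1).continuousAt.eventually (h1.eventually (by simp))] with w hw0 hw1
    exact pd1_bregman (hw0.of_le (by norm_num)) (hw1.differentiableAt two_ne_zero)
  rw [pd2_eq_pd1_pd1, pd1_congr (hgrad.mono fun w hw => hw i)]
  have dF'0 : DifferentiableAt ℝ (deriv F) (z 0) :=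
    differentiableAt_iterate_deriv 1 (h0.of_le (by norm_num))
  have dF'1 : DifferentiableAt ℝ (deriv F) (z 1) := differentiableAt_iterate_deriv 1 h1
  have dF'' := differentiableAt_iterate_deriv 2 h0
  fin_cases i
  · change pd1 (fun w => deriv^[2] F (w 0) * (w 0 - w 1)) j z = _
    rw [pd1_mul (hasFDerivAt_comp_apply dF'').differentiableAt (by fun_prop),
      pd1_sub (by fun_prop) (by fun_prop), pd1_comp_apply dF'', pd1_apply, pd1_apply,
      ← Function.iterate_succ_apply' deriv]
    fin_cases j
    · simp only [Fin.zero_eta, zero_ne_one, ↓reduceIte, Matrix.of_apply, Matrix.cons_val_zero,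
        Matrix.cons_val']
      ring
    · simp
  · change pd1 (fun w => deriv F (w 1) - deriv F (w 0)) j z = _
    rw [pd1_sub (hasFDerivAt_comp_apply dF'1).differentiableAt
      (hasFDerivAt_comp_apply dF'0).differentiableAt, pd1_comp_apply dF'1, pd1_comp_apply dF'0]
    fin_cases j <;> simp

lemma sum_pd1_bregman (h0 : ContDiffAt ℝ 2 F (z 0)) (h1 : DifferentiableAt ℝ F (z 1)) :
    ∑ i, pd1 (bregman F) i z = bregman (deriv F) z := by
  simp only [pd1_bregman h0 h1, bregman, Fin.sum_univ_two, Matrix.cons_val_zero,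
    Matrix.cons_val_one, Function.iterate_succ_apply, Function.iterate_zero_apply]
  ring

lemma sum_sum_pd2_bregman (h0 : ContDiffAt ℝ 3 F (z 0)) (h1 : ContDiffAt ℝ 2 F (z 1)) :
    ∑ i, ∑ j, pd2 (bregman F) i j z = bregman (deriv^[2] F) z := by
  simp only [pd2_bregman h0 h1, bregman, Fin.sum_univ_two, Matrix.of_apply, Matrix.cons_val',
    Matrix.cons_val_zero, Matrix.cons_val_one, Matrix.cons_val_fin_one,
    ← Function.iterate_succ_apply' deriv]
  ring

lemma abs_bregman_le {s : Set ℝ} {M : ℝ} (hs : Convex ℝ s) (hF : ∀ x ∈ s, ContDiffAt ℝ 2 F x)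
    (hM : ∀ x ∈ s, |deriv^[2] F x| ≤ M) (h0 : z 0 ∈ s) (h1 : z 1 ∈ s) :
    |bregman F z| ≤ M * |z 0 - z 1| ^ 2 := by
  have hsub : segment ℝ (z 0) (z 1) ⊆ s := hs.segment_subset h0 h1
  have dF : ∀ x ∈ s, DifferentiableAt ℝ F x := fun x hx => (hF x hx).differentiableAt two_ne_zero
  have dF' : ∀ x ∈ s, DifferentiableAt ℝ (deriv F) x := fun x hx =>
    differentiableAt_iterate_deriv 1 (hF x hx)
  have hF' : ∀ t ∈ segment ℝ (z 0) (z 1), |deriv F t - deriv F (z 0)| ≤ M * |z 0 - z 1| := by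
    intro t ht
    have htz : |t - z 0| ≤ |z 0 - z 1| := by
      rw [abs_sub_comm (z 0)]
      exact Set.abs_sub_left_of_mem_uIcc (segment_eq_uIcc (z 0) (z 1) ▸ ht)
    have hM0 : 0 ≤ M := (abs_nonneg _).trans (hM _ h0)
    exact (hs.norm_image_sub_le_of_norm_deriv_le dF' hM h0 (hsub ht)).trans
      (mul_le_mul_of_nonneg_left htz hM0)
  have hderiv : ∀ t ∈ segment ℝ (z 0) (z 1), HasDerivWithinAt (fun t => F t - deriv F (z 0) * t)
      (deriv F t - deriv F (z 0)) (segment ℝ (z 0) (z 1)) t := fun t ht =>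
    ((dF t (hsub ht)).hasDerivAt.fun_sub (hasDerivAt_const_mul (deriv F (z 0)))).hasDerivWithinAt
  calc |bregman F z|
      = |F (z 1) - deriv F (z 0) * z 1 - (F (z 0) - deriv F (z 0) * z 0)| := by
        congr 1
        unfold bregman
        ring
    _ ≤ M * |z 0 - z 1| * |z 1 - z 0| :=
        (convex_segment _ _).norm_image_sub_le_of_norm_hasDerivWithin_le hderiv hF'
          (left_mem_segment ℝ _ _) (right_mem_segment ℝ _ _)
    _ = M * |z 0 - z 1| ^ 2 := by
        rw [abs_sub_comm (z 1)]
        ring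

end Bregman

/-- The estimates, with constant `K`, that a function vanishing to second order on the diagonal
satisfies at `z`: a coordinate derivative costs one factor of the distance to the diagonal, the
diagonal derivative `∂₀ + ∂₁` costs none. -/
structure DiagonalFlat (K : ℝ) (Ψ : (Fin 2 → ℝ) → ℝ) (z : Fin 2 → ℝ) : Prop where
  contDiffAt : ContDiffAt ℝ 2 Ψ z
  abs_le : |Ψ z| ≤ K * |z 0 - z 1| ^ 2
  abs_pd1_le (i : Fin 2) : |pd1 Ψ i z| ≤ K * |z 0 - z 1|
  abs_sum_pd1_le : |∑ i, pd1 Ψ i z| ≤ K * |z 0 - z 1| ^ 2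
  abs_sum_pd2_le (j : Fin 2) : |∑ i, pd2 Ψ i j z| ≤ K * |z 0 - z 1|
  abs_sum_sum_pd2_le : |∑ i, ∑ j, pd2 Ψ i j z| ≤ K * |z 0 - z 1| ^ 2

section DiagonalFlat

variable {K M : ℝ} {z : Fin 2 → ℝ}

lemma diagonalFlat_bregman {F : ℝ → ℝ} {s : Set ℝ} (hs : Convex ℝ s)
    (hF : ∀ x ∈ s, ContDiffAt ℝ 4 F x) (h2 : ∀ x ∈ s, |deriv^[2] F x| ≤ M)
    (h3 : ∀ x ∈ s, |deriv^[3] F x| ≤ M) (h4 : ∀ x ∈ s, |deriv^[4] F x| ≤ M)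
    (hz0 : z 0 ∈ s) (hz1 : z 1 ∈ s) : DiagonalFlat M (bregman F) z := by
  have hF2 : ∀ x ∈ s, ContDiffAt ℝ 2 F x := fun x hx => (hF x hx).of_le (by norm_num)
  have hF3 : ∀ x ∈ s, ContDiffAt ℝ 3 F x := fun x hx => (hF x hx).of_le (by norm_num)
  have hF' : ∀ x ∈ s, ContDiffAt ℝ 2 (deriv F) x := fun x hx =>
    contDiffAt_iterate_deriv 1 (hF3 x hx)
  have hF'' : ∀ x ∈ s, ContDiffAt ℝ 2 (deriv^[2] F) x := fun x hx =>
    contDiffAt_iterate_deriv 2 (hF x hx)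
  have mvt {G : ℝ → ℝ} (hG : ∀ x ∈ s, ContDiffAt ℝ 2 G x) (hM : ∀ x ∈ s, |deriv G x| ≤ M) :
      |G (z 1) - G (z 0)| ≤ M * |z 0 - z 1| := by
    rw [abs_sub_comm (z 0)]
    exact hs.norm_image_sub_le_of_norm_deriv_le
      (fun x hx => (hG x hx).differentiableAt two_ne_zero) hM hz0 hz1
  have dF : ∀ x ∈ s, DifferentiableAt ℝ F x := fun x hx => (hF x hx).differentiableAt four_ne_zero
  have grad := pd1_bregman (hF2 _ hz0) (dF _ hz1)
  have hess := pd2_bregman (hF3 _ hz0) (hF2 _ hz1)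
  refine
    { contDiffAt := contDiffAt_bregman (hF3 _ hz0) (hF2 _ hz1)
      abs_le := abs_bregman_le hs hF2 h2 hz0 hz1
      abs_pd1_le := fun i => ?_
      abs_sum_pd1_le := sum_pd1_bregman (hF2 _ hz0) (dF _ hz1) ▸
        abs_bregman_le hs hF' h3 hz0 hz1
      abs_sum_pd2_le := fun j => ?_
      abs_sum_sum_pd2_le := sum_sum_pd2_bregman (hF3 _ hz0) (hF2 _ hz1) ▸
        abs_bregman_le hs hF'' h4 hz0 hz1 }
  · fin_cases i
    · simpa [grad, abs_mul] using mul_le_mul_of_nonneg_right (h2 _ hz0) (abs_nonneg (z 0 - z 1))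
    · simpa [grad] using mvt hF' h2
  · fin_cases j
    · simpa [hess, abs_mul] using mul_le_mul_of_nonneg_right (h3 _ hz0) (abs_nonneg (z 0 - z 1))
    · simpa [hess, neg_add_eq_sub] using mvt hF'' h3

lemma abs_pd2_bregman_le {F : ℝ → ℝ} {L : ℝ} (h0 : ContDiffAt ℝ 3 F (z 0))
    (h1 : ContDiffAt ℝ 2 F (z 1)) (h2 : ∀ i, |deriv^[2] F (z i)| ≤ L)
    (h3 : |deriv^[3] F (z 0)| ≤ M) (i j : Fin 2) :
    |pd2 (bregman F) i j z| ≤ L + M * |z 0 - z 1| := by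
  have hM : |deriv^[3] F (z 0) * (z 0 - z 1)| ≤ M * |z 0 - z 1| := by
    rw [abs_mul]
    gcongr
  have hM0 := (abs_nonneg _).trans hM
  rw [pd2_bregman h0 h1]
  fin_cases i <;> fin_cases j
  · exact (abs_add_le _ _).trans (add_le_add (h2 0) hM)
  · simpa using (h2 0).trans (le_add_of_nonneg_right hM0)
  · simpa using (h2 0).trans (le_add_of_nonneg_right hM0)
  · simpa using (h2 1).trans (le_add_of_nonneg_right hM0)

variable {A : ℝ} {w Ψ : (Fin 2 → ℝ) → ℝ}

lemma DiagonalFlat.mul_sq_le (h : DiagonalFlat K Ψ z) (hz : |z 0 - z 1| ≤ 1) :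
    K * |z 0 - z 1| ^ 2 ≤ K * |z 0 - z 1| := by
  nlinarith [(abs_nonneg _).trans (h.abs_pd1_le 0)]

lemma DiagonalFlat.abs_pd2_mul_le {L : ℝ} (h : DiagonalFlat K Ψ z) (hz : |z 0 - z 1| ≤ 1)
    (hw : ContDiffAt ℝ 2 w z) (hw0 : |w z| ≤ A) (hw1 : ∀ i, |pd1 w i z| ≤ A)
    (hw2 : ∀ i j, |pd2 w i j z| ≤ A) (hΨ : ∀ i j, |pd2 Ψ i j z| ≤ L) (i j : Fin 2) :
    |pd2 (fun x => w x * Ψ x) i j z| ≤ A * (L + 3 * K * |z 0 - z 1|) := by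
  rw [pd2_mul hw h.contDiffAt, mul_comm (Ψ z)]
  linarith [abs_add_four_le (a := w z * pd2 Ψ i j z) (b := pd1 w i z * pd1 Ψ j z)
      (c := pd1 w j z * pd1 Ψ i z) (d := pd2 w i j z * Ψ z),
    abs_mul_le_mul hw0 (hΨ i j), abs_mul_le_mul (hw1 i) (h.abs_pd1_le j),
    abs_mul_le_mul (hw1 j) (h.abs_pd1_le i),
    abs_mul_le_mul (hw2 i j) (h.abs_le.trans (h.mul_sq_le hz))]

lemma DiagonalFlat.mul (h : DiagonalFlat K Ψ z) (hz : |z 0 - z 1| ≤ 1)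
    (hw : ContDiffAt ℝ 2 w z) (hw0 : |w z| ≤ A) (hw1 : ∀ i, |pd1 w i z| ≤ A)
    (hw2 : ∀ i j, |pd2 w i j z| ≤ A) : DiagonalFlat (9 * A * K) (fun x => w x * Ψ x) z := by
  have hA : 0 ≤ A := (abs_nonneg _).trans hw0
  have hsq : 0 ≤ A * (K * |z 0 - z 1| ^ 2) := mul_nonneg hA ((abs_nonneg _).trans h.abs_le)
  have hsq_le : A * (K * |z 0 - z 1| ^ 2) ≤ A * (K * |z 0 - z 1|) :=
    mul_le_mul_of_nonneg_left (h.mul_sq_le hz) hA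
  have hsum_pd1 : |∑ i, pd1 w i z| ≤ 2 * A := abs_sum_fin_le hw1
  have hsum_pd2 (j) : |∑ i, pd2 w i j z| ≤ 2 * A := abs_sum_fin_le fun i => hw2 i j
  have hsum_sum_pd2 : |∑ i, ∑ j, pd2 w i j z| ≤ 2 * (2 * A) :=
    abs_sum_fin_le fun i => abs_sum_fin_le (hw2 i)
  have dw := hw.differentiableAt two_ne_zero
  have dΨ := h.contDiffAt.differentiableAt two_ne_zero
  refine ⟨hw.mul h.contDiffAt, ?_, fun i => ?_, ?_, fun j => ?_, ?_⟩
  · linarith [abs_mul_le_mul hw0 h.abs_le]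
  · rw [pd1_mul dw dΨ, mul_comm (Ψ z)]
    grw [abs_add_le, abs_mul_le_mul hw0 (h.abs_pd1_le i), abs_mul_le_mul (hw1 i) h.abs_le]
    linarith
  · rw [sum_pd1_mul dw dΨ]
    grw [abs_add_le, abs_mul_le_mul hw0 h.abs_sum_pd1_le, abs_mul_le_mul hsum_pd1 h.abs_le]
    linarith
  · rw [sum_pd2_mul hw h.contDiffAt]
    grw [abs_add_four_le, abs_mul_le_mul hw0 (h.abs_sum_pd2_le j),
      abs_mul_le_mul hsum_pd1 (h.abs_pd1_le j), abs_mul_le_mul (hw1 j) h.abs_sum_pd1_le,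
      abs_mul_le_mul (hsum_pd2 j) h.abs_le]
    linarith
  · rw [sum_sum_pd2_mul hw h.contDiffAt]
    grw [abs_add_four_le, abs_mul_le_mul hw0 h.abs_sum_sum_pd2_le,
      abs_mul_le_mul hsum_pd1 h.abs_sum_pd1_le, abs_mul_le_mul hsum_sum_pd2 h.abs_le]
    linarith

end DiagonalFlat

section IsTame

variable {ε K : ℝ} {Ψ Φ : (Fin 2 → ℝ) → ℝ} {Y : Set (Fin 2 → ℝ)}

lemma isTame_of_diagonalFlat (hK : 1 ≤ K) (hdiag : ∀ y ∈ Set.Ioo (0 : ℝ) 1, Ψ (fun _ => y) = 0)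
    (hflat : ∀ z ∈ Y, DiagonalFlat K Ψ z) (hε : ∀ z ∈ Y, K * |z 0 - z 1| ≤ ε)
    (hpd2 : ∀ z ∈ Y, ∀ i j, |pd2 Ψ i j z| ≤ 100) : IsTame ε Ψ Y := by
  refine ⟨hdiag, fun z hz j => ((hflat z hz).abs_sum_pd2_le j).trans (hε z hz), fun z hz => ?_,
    hpd2⟩
  calc |∑ i, ∑ j, pd2 Ψ i j z| ≤ K * |z 0 - z 1| ^ 2 := (hflat z hz).abs_sum_sum_pd2_le
    _ ≤ K ^ 2 * |z 0 - z 1| ^ 2 := by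
      gcongr
      exact le_self_pow₀ hK two_ne_zero
    _ = (K * |z 0 - z 1|) ^ 2 := (mul_pow ..).symm
    _ ≤ ε ^ 2 := by
      gcongr
      exact hε z hz

lemma isOpen_box (k : ℕ) : IsOpen (box k) := by
  have : box k = Set.univ.pi fun _ => Set.Ioo (0 : ℝ) 1 := by
    ext
    simp [box]
  rw [this]
  exact isOpen_set_pi Set.finite_univ fun _ _ => isOpen_Ioo

lemma IsTame.congr (h : IsTame ε Ψ Y) (hΨΦ : Set.EqOn Ψ Φ (box 2)) (hY : Y ⊆ box 2) :
    IsTame ε Φ Y := by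
  have hpd2 : ∀ z ∈ Y, ∀ i j, pd2 Φ i j z = pd2 Ψ i j z := fun z hz i j =>
    pd2_congr (hΨΦ.symm.eventuallyEq_of_mem ((isOpen_box 2).mem_nhds (hY hz))) i j
  obtain ⟨hdiag, hsum, hsum_sum, hentry⟩ := h
  refine ⟨fun y hy => hΨΦ (fun _ => hy) ▸ hdiag y hy, fun z hz j => ?_, fun z hz => ?_,
    fun z hz i j => ?_⟩
  · simpa only [hpd2 z hz] using hsum z hz j
  · simpa only [hpd2 z hz] using hsum_sum z hz
  · simpa only [hpd2 z hz] using hentry z hz i j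

end IsTame

section BinEntropy

variable {p : ℝ}

lemma contDiffAt_binEntropy {n : WithTop ℕ∞} (hp₀ : p ≠ 0) (hp₁ : p ≠ 1) :
    ContDiffAt ℝ n Real.binEntropy p := by
  have hp₁' : 1 - p ≠ 0 := sub_ne_zero.2 hp₁.symm
  unfold Real.binEntropy
  fun_prop (disch := simpa)

lemma hasDerivAt_mul_one_sub (p : ℝ) : HasDerivAt (fun q : ℝ => q * (1 - q)) (1 - 2 * p) p := by
  have h := (hasDerivAt_id' p).fun_mul ((hasDerivAt_id' p).const_sub 1)
  rwa [show 1 * (1 - p) + p * -1 = 1 - 2 * p by ring] at h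

lemma deriv3_binEntropy (hp₀ : p ≠ 0) (hp₁ : p ≠ 1) :
    deriv^[3] Real.binEntropy p = (1 - 2 * p) / (p * (1 - p)) ^ 2 := by
  have hV : p * (1 - p) ≠ 0 := mul_ne_zero hp₀ (sub_ne_zero.2 hp₁.symm)
  have h2 : deriv^[2] Real.binEntropy = fun q => -1 / (q * (1 - q)) :=
    funext fun _ => Real.deriv2_binEntropy
  rw [Function.iterate_succ_apply', h2,
    ((hasDerivAt_const p (-1 : ℝ)).fun_div (hasDerivAt_mul_one_sub p) hV).deriv]
  ring

lemma deriv4_binEntropy (hp₀ : p ≠ 0) (hp₁ : p ≠ 1) :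
    deriv^[4] Real.binEntropy p =
      -2 / (p * (1 - p)) ^ 2 - 2 * (1 - 2 * p) ^ 2 / (p * (1 - p)) ^ 3 := by
  have hp₁' : 1 - p ≠ 0 := sub_ne_zero.2 hp₁.symm
  have hnum : HasDerivAt (fun q : ℝ => 1 - 2 * q) (-2) p := by
    simpa using (hasDerivAt_const_mul (2 : ℝ)).const_sub 1
  have hden := (hasDerivAt_mul_one_sub p).fun_pow 2
  have h3 : deriv^[3] Real.binEntropy =ᶠ[𝓝 p] fun q => (1 - 2 * q) / (q * (1 - q)) ^ 2 := by
    filter_upwards [eventually_ne_nhds hp₀, eventually_ne_nhds hp₁] with q hq₀ hq₁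
    exact deriv3_binEntropy hq₀ hq₁
  rw [Function.iterate_succ_apply', h3.deriv_eq,
    (hnum.fun_div hden (pow_ne_zero 2 (mul_ne_zero hp₀ hp₁'))).deriv]
  field_simp
  ring

lemma ne_zero_and_ne_one_of_mem_Icc (hp : p ∈ Set.Icc (1 / 5 : ℝ) (3 / 10)) : p ≠ 0 ∧ p ≠ 1 :=
  ⟨by linarith [hp.1], by linarith [hp.2]⟩

lemma inv_mul_one_sub_mem_Icc (hp : p ∈ Set.Icc (1 / 5 : ℝ) (3 / 10)) :
    (p * (1 - p))⁻¹ ∈ Set.Icc (0 : ℝ) (25 / 4) := by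
  have hV : 4 / 25 ≤ p * (1 - p) := by nlinarith [hp.1, hp.2]
  refine ⟨by positivity, ?_⟩
  exact inv_le_of_inv_le₀ (by norm_num) (by linarith)

lemma abs_deriv2_binEntropy_le (hp : p ∈ Set.Icc (1 / 5 : ℝ) (3 / 10)) :
    |deriv^[2] Real.binEntropy p| ≤ 25 / 4 := by
  obtain ⟨hV₀, hV⟩ := inv_mul_one_sub_mem_Icc hp
  rwa [Real.deriv2_binEntropy, neg_div, one_div, abs_neg, abs_of_nonneg hV₀]

lemma abs_deriv3_binEntropy_le (hp : p ∈ Set.Icc (1 / 5 : ℝ) (3 / 10)) :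
    |deriv^[3] Real.binEntropy p| ≤ 25 := by
  obtain ⟨hp₀, hp₁⟩ := ne_zero_and_ne_one_of_mem_Icc hp
  obtain ⟨hV₀, hV⟩ := inv_mul_one_sub_mem_Icc hp
  have hnum : |1 - 2 * p| ≤ 3 / 5 := abs_le.2 ⟨by linarith [hp.2], by linarith [hp.1]⟩
  calc |deriv^[3] Real.binEntropy p| = |1 - 2 * p| * (p * (1 - p))⁻¹ ^ 2 := by
        rw [deriv3_binEntropy hp₀ hp₁, div_eq_mul_inv, abs_mul, ← inv_pow, abs_pow,
          abs_of_nonneg hV₀]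
    _ ≤ 3 / 5 * (25 / 4) ^ 2 := by gcongr
    _ ≤ 25 := by norm_num

lemma abs_deriv4_binEntropy_le (hp : p ∈ Set.Icc (1 / 5 : ℝ) (3 / 10)) :
    |deriv^[4] Real.binEntropy p| ≤ 256 := by
  obtain ⟨hp₀, hp₁⟩ := ne_zero_and_ne_one_of_mem_Icc hp
  obtain ⟨hV₀, hV⟩ := inv_mul_one_sub_mem_Icc hp
  have hnum : |1 - 2 * p| ≤ 3 / 5 := abs_le.2 ⟨by linarith [hp.2], by linarith [hp.1]⟩
  have hderiv : deriv^[4] Real.binEntropy p =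
      -(2 * (p * (1 - p))⁻¹ ^ 2 + 2 * |1 - 2 * p| ^ 2 * (p * (1 - p))⁻¹ ^ 3) := by
    rw [deriv4_binEntropy hp₀ hp₁, sq_abs, div_eq_mul_inv, div_eq_mul_inv, ← inv_pow, ← inv_pow]
    ring
  calc |deriv^[4] Real.binEntropy p|
      = 2 * (p * (1 - p))⁻¹ ^ 2 + 2 * |1 - 2 * p| ^ 2 * (p * (1 - p))⁻¹ ^ 3 := by
        rw [hderiv, abs_neg, abs_of_nonneg (by positivity)]
    _ ≤ 2 * (25 / 4) ^ 2 + 2 * (3 / 5) ^ 2 * (25 / 4) ^ 3 := by gcongr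
    _ ≤ 256 := by norm_num

end BinEntropy

section RateFunction

variable {z : Fin 2 → ℝ} {ε : ℝ} {Y : Set (Fin 2 → ℝ)}

lemma eqOn_bregman_binEntropy_psiFun : Set.EqOn (bregman Real.binEntropy) psiFun (box 2) := by
  intro z hz
  obtain ⟨h0, h0'⟩ := hz 0
  obtain ⟨h1, h1'⟩ := hz 1
  rw [← sub_pos] at h0' h1'
  simp only [bregman, psiFun, Real.binEntropy, Real.deriv_binEntropy, Real.log_inv,
    Real.log_div h1.ne' h0.ne', Real.log_div h1'.ne' h0'.ne']
  ring

lemma diagonalFlat_bregman_binEntropy (hz : ∀ i, z i ∈ Set.Icc (1 / 5 : ℝ) (3 / 10)) :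
    DiagonalFlat 256 (bregman Real.binEntropy) z :=
  diagonalFlat_bregman (convex_Icc _ _)
    (fun _ hx => (ne_zero_and_ne_one_of_mem_Icc hx).elim contDiffAt_binEntropy)
    (fun _ hx => (abs_deriv2_binEntropy_le hx).trans (by norm_num))
    (fun _ hx => (abs_deriv3_binEntropy_le hx).trans (by norm_num))
    (fun _ hx => abs_deriv4_binEntropy_le hx) (hz 0) (hz 1)

lemma abs_sub_le_of_mem_Icc (hz : ∀ i, z i ∈ Set.Icc (1 / 5 : ℝ) (3 / 10)) :
    |z 0 - z 1| ≤ 1 / 10 :=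
  (Real.dist_le_of_mem_Icc (hz 0) (hz 1)).trans_eq (by norm_num)

lemma abs_pd2_bregman_binEntropy_le (hz : ∀ i, z i ∈ Set.Icc (1 / 5 : ℝ) (3 / 10))
    (i j : Fin 2) : |pd2 (bregman Real.binEntropy) i j z| ≤ 9 := by
  have hsmooth (l) {m : WithTop ℕ∞} : ContDiffAt ℝ m Real.binEntropy (z l) :=
    (ne_zero_and_ne_one_of_mem_Icc (hz l)).elim contDiffAt_binEntropy
  have h := abs_pd2_bregman_le (hsmooth 0) (hsmooth 1)
    (fun l => abs_deriv2_binEntropy_le (hz l)) (abs_deriv3_binEntropy_le (hz 0)) i j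
  linarith [abs_sub_le_of_mem_Icc hz]

lemma subset_box_of_mem_Icc (hY : ∀ z ∈ Y, ∀ i, z i ∈ Set.Icc (1 / 5 : ℝ) (3 / 10)) : Y ⊆ box 2 :=
  fun z hz i => ⟨by linarith [(hY z hz i).1], by linarith [(hY z hz i).2]⟩

lemma isTame_psiFun (hY : ∀ z ∈ Y, ∀ i, z i ∈ Set.Icc (1 / 5 : ℝ) (3 / 10))
    (hε : ∀ z ∈ Y, 256 * |z 0 - z 1| ≤ ε) : IsTame ε psiFun Y := by
  have h : IsTame ε (bregman Real.binEntropy) Y :=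
    isTame_of_diagonalFlat (by norm_num) (fun y _ => bregman_diag _ y)
      (fun z hz => diagonalFlat_bregman_binEntropy (hY z hz)) hε
      fun z hz i j => (abs_pd2_bregman_binEntropy_le (hY z hz) i j).trans (by norm_num)
  exact h.congr eqOn_bregman_binEntropy_psiFun (subset_box_of_mem_Icc hY)

lemma isTame_one_sub_mul_psiFun (hY : ∀ z ∈ Y, ∀ i, z i ∈ Set.Icc (1 / 5 : ℝ) (3 / 10))
    (hε : ∀ z ∈ Y, 2304 * |z 0 - z 1| ≤ ε) : IsTame ε (fun z => (1 - z 1) * psiFun z) Y := by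
  have hw : ∀ z ∈ Y, |1 - z 1| ≤ 1 := fun z hz =>
    abs_le.2 ⟨by linarith [(hY z hz 1).2], by linarith [(hY z hz 1).1]⟩
  have hw1 (z : Fin 2 → ℝ) (i) : |pd1 (fun w => 1 - w 1) i z| ≤ 1 := by
    rw [pd1_one_sub_apply]
    split_ifs <;> simp
  have hw2 (z : Fin 2 → ℝ) (i j) : |pd2 (fun w => 1 - w 1) i j z| ≤ 1 := by
    simp [pd2_one_sub_apply]
  have hd : ∀ z ∈ Y, |z 0 - z 1| ≤ 1 / 10 := fun z hz => abs_sub_le_of_mem_Icc (hY z hz)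
  have hwd : ContDiff ℝ 2 fun w : Fin 2 → ℝ => 1 - w 1 := by fun_prop
  have h : IsTame ε (fun z => (1 - z 1) * bregman Real.binEntropy z) Y := by
    refine isTame_of_diagonalFlat (K := 9 * 1 * 256) (by norm_num)
      (fun y _ => by rw [bregman_diag, mul_zero]) (fun z hz => ?_)
      (fun z hz => (hε z hz).trans' (by norm_num)) fun z hz i j => ?_
    · exact (diagonalFlat_bregman_binEntropy (hY z hz)).mul ((hd z hz).trans (by norm_num))
        hwd.contDiffAt (hw z hz) (hw1 z) (hw2 z)
    · have hentry := (diagonalFlat_bregman_binEntropy (hY z hz)).abs_pd2_mul_le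
        ((hd z hz).trans (by norm_num)) hwd.contDiffAt (hw z hz) (hw1 z) (hw2 z)
        (abs_pd2_bregman_binEntropy_le (hY z hz)) i j
      linarith [hentry, hd z hz]
  refine h.congr (fun z hz => ?_) (subset_box_of_mem_Icc hY)
  simp only [eqOn_bregman_binEntropy_psiFun hz]

lemma mem_Icc_of_mem_Yset {k : ℕ} (hk : 5 ≤ k) (hz : z ∈ Yset k) (i : Fin 2) :
    z i ∈ Set.Icc (1 / 5 : ℝ) (3 / 10) := by
  have hk' : 1 / (k : ℝ) ^ 2 ≤ 1 / 5 ^ 2 := by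
    gcongr
    exact_mod_cast hk
  obtain ⟨-, -, h0, h1⟩ := hz
  have hi : |z i - 1 / 4| ≤ 1 / (k : ℝ) ^ 2 := by fin_cases i <;> assumption
  obtain ⟨hlo, hhi⟩ := abs_le.1 (hi.trans hk')
  constructor <;> linarith

end RateFunction

/-- For all large `k`, both `ψ` and `(y₁,y₂) ↦ (1 - y₂) ψ(y₁,y₂)` are
`(C k^c 2^{-k})`-tame on `Y`. -/
theorem statement16 :
    ∃ (k0 : ℕ) (C c : ℝ), 0 < C ∧ 0 < c ∧
      ∀ k : ℕ, k0 ≤ k →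
        IsTame (C * (k : ℝ) ^ c * ((2 : ℝ) ^ k)⁻¹) psiFun (Yset k) ∧
        IsTame (C * (k : ℝ) ^ c * ((2 : ℝ) ^ k)⁻¹)
          (fun z => (1 - z 1) * psiFun z) (Yset k) := by
  refine ⟨5, 2304, 3, by norm_num, by norm_num, fun k hk => ?_⟩
  have hbound : ∀ z ∈ Yset k,
      2304 * |z 0 - z 1| ≤ 2304 * (k : ℝ) ^ (3 : ℝ) * ((2 : ℝ) ^ k)⁻¹ := by
    rintro z ⟨-, hz, -⟩
    rw [mul_assoc, show (3 : ℝ) = (3 : ℕ) by norm_num, Real.rpow_natCast]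
    gcongr
  exact ⟨isTame_psiFun (fun z hz => mem_Icc_of_mem_Yset hk hz)
      fun z hz => (hbound z hz).trans' (by gcongr; norm_num),
    isTame_one_sub_mul_psiFun (fun z hz => mem_Icc_of_mem_Yset hk hz) hbound⟩
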